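/- Fix a positive integer k and let ℍ_k = {(z₁,z₂) ∈ ℂ² : |z₁|^k < |z₂| < 1}, with 𝒫(z,w) = z₂·conj(w₂)/((1 - z₂·conj(w₂))²(z₂·conj(w₂) - (z₁conj(w₁))^k)²). For every ε > 0 there exists δ > 0 (depending only on ε and k) such that for all w ∈ ℍ_k, ∫_{{z ∈ ℍ_k : |z₂| < δ}} |𝒫(z,w)|² dV(z) ≤ ε · |w₂|^{-2}(1 - |w₂|²)^{-2}(1 - |w₁|^{2k}/|w₂|²)^{-2}. -/

import Mathlib

open Complex ComplexConjugate MeasureTheory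

/-- The fat Hartogs triangle `ℍ_k = {(z₁,z₂) : |z₁|^k < |z₂| < 1}`. -/
def hartogsTriangle (k : ℕ) : Set (ℂ × ℂ) :=
  {z | ‖z.1‖ ^ k < ‖z.2‖ ∧ ‖z.2‖ < 1}

/-- The kernel `𝒫(z,w) = t / ((1-t)² (t - s^k)²)`, `s = z₁·conj w₁`, `t = z₂·conj w₂`. -/
noncomputable def Pker (k : ℕ) (z w : ℂ × ℂ) : ℂ :=
  z.2 * conj w.2 /
    ((1 - z.2 * conj w.2) ^ 2 * (z.2 * conj w.2 - (z.1 * conj w.1) ^ k) ^ 2)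

lemma aux_polar (f : ℂ → ENNReal) (hf : Measurable f) :
    ∫⁻ z, f z = ∫⁻ r in Set.Ioi (0:ℝ), ENNReal.ofReal r *
      ∫⁻ θ in Set.Ioo (-Real.pi) Real.pi, f (circleMap 0 r θ) := by
  rw [← Complex.lintegral_comp_polarCoord_symm, polarCoord_target, Measure.volume_eq_prod]
  have hm : Measurable fun p : ℝ × ℝ => f (Complex.polarCoord.symm p) := by
    refine hf.comp ?_
    have : (fun p : ℝ × ℝ => Complex.polarCoord.symm p) =
      fun p => (p.1 : ℂ) * (Real.cos p.2 + Real.sin p.2 * Complex.I) := by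
      ext p; exact Complex.polarCoord_symm_apply p
    change Measurable (fun p : ℝ × ℝ => Complex.polarCoord.symm p)
    rw [this]
    fun_prop
  rw [setLIntegral_prod]
  · refine setLIntegral_congr_fun measurableSet_Ioi ?_
    intro r _
    simp only [smul_eq_mul]
    rw [lintegral_const_mul']
    · congr 1
      refine lintegral_congr fun θ => ?_
      congr 1
      rw [Complex.polarCoord_symm_apply]
      simp [circleMap, Complex.exp_mul_I]
    · simp
  · apply Measurable.aemeasurable
    simp only [smul_eq_mul]
    exact (by fun_prop : Measurable fun p : ℝ × ℝ => ENNReal.ofReal p.1).mul hm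

lemma aux_pt (x : ℂ) (hx : ‖x‖ < 1) :
    (‖1 - x‖ ^ 4)⁻¹ ≤ 4 / (1 - ‖x‖ ^ 2) ^ 3 * ((1 + x) / (1 - x)).re := by
  have h0 : 0 ≤ ‖x‖ := norm_nonneg x
  have hn : 1 - ‖x‖ ≤ ‖1 - x‖ := by
    have := norm_sub_norm_le (1:ℂ) x; simpa using this
  have hp : 0 < ‖1 - x‖ := by linarith
  have hre : ((1 + x) / (1 - x)).re = (1 - ‖x‖ ^ 2) / ‖1 - x‖ ^ 2 := by
    rw [Complex.div_re, ← Complex.normSq_eq_norm_sq, ← Complex.normSq_eq_norm_sq, ← add_div]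
    congr 1
    simp [Complex.normSq_apply]; ring
  rw [hre]
  have h1 : 0 < 1 - ‖x‖ ^ 2 := by nlinarith
  have h2 : (1 - ‖x‖ ^ 2) ≤ 2 * ‖1 - x‖ := by nlinarith
  have h3 : (1 - ‖x‖ ^ 2) ^ 2 ≤ 4 * ‖1 - x‖ ^ 2 := by nlinarith
  rw [inv_eq_one_div, div_mul_div_comm, div_le_div_iff₀ (by positivity) (by positivity)]
  have : 0 ≤ (4 * ‖1 - x‖ ^ 2 - (1 - ‖x‖ ^ 2) ^ 2) * ((1 - ‖x‖ ^ 2) * ‖1 - x‖ ^ 2) := by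
    apply mul_nonneg (by linarith); positivity
  nlinarith

lemma aux_circle (k : ℕ) (hk : 1 ≤ k) (c : ℂ) (r : ℝ) (hr : 0 < r) (hc : ‖c‖ * r ^ k < 1) :
    ∫⁻ θ in Set.Ioo (-Real.pi) Real.pi,
      ENNReal.ofReal ((‖1 - c * (circleMap 0 r θ) ^ k‖ ^ 4)⁻¹) ≤
      ENNReal.ofReal (8 * Real.pi / (1 - (‖c‖ * r ^ k) ^ 2) ^ 3) := by
  set F : ℂ → ℂ := fun z => (1 + c * z ^ k) / (1 - c * z ^ k) with hF
  have hnorm : ∀ z ∈ Metric.closedBall (0:ℂ) r, ‖c * z ^ k‖ < 1 := by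
    intro z hz
    rw [norm_mul, norm_pow]
    refine lt_of_le_of_lt ?_ hc
    have : ‖z‖ ≤ r := by simpa using hz
    gcongr
  have hne : ∀ z ∈ Metric.closedBall (0:ℂ) r, 1 - c * z ^ k ≠ 0 := by
    intro z hz h
    have := hnorm z hz
    rw [← sub_eq_zero.1 h] at this
    simp at this
  have hcont : ContinuousOn F (Metric.closedBall 0 r) := by
    apply ContinuousOn.div (by fun_prop) (by fun_prop) hne
  have havg : Real.circleAverage F 0 r = 1 := by
    rw [circleAverage_of_differentiable_on_off_countable (s := ∅) Set.countable_empty]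
    · have : k ≠ 0 := by omega
      simp [hF, this]
    · rwa [abs_of_pos hr]
    · intro z hz
      rw [abs_of_pos hr] at hz
      have := hne z (Metric.ball_subset_closedBall hz.1)
      exact DifferentiableAt.div (by fun_prop) (by fun_prop) this
  have hFc : Continuous fun θ => F (circleMap 0 r θ) := by
    refine hcont.comp_continuous (continuous_circleMap 0 r) ?_
    intro θ
    exact circleMap_mem_closedBall 0 hr.le θ
  have hint : ∫ θ in (-Real.pi)..Real.pi, F (circleMap 0 r θ) = 2 * Real.pi := by
    have hper : (fun θ ↦ F (circleMap 0 r θ)).Periodic (2 * Real.pi) :=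
      fun x ↦ by simp [periodic_circleMap 0 r x]
    have h2 := hper.intervalIntegral_add_eq (-Real.pi) 0
    have e : -Real.pi + 2 * Real.pi = Real.pi := by ring
    rw [e, zero_add] at h2
    rw [h2]
    rw [Real.circleAverage_def, inv_smul_eq_iff₀ (by positivity)] at havg
    rw [havg]; simp
  have hintre : ∫ θ in (-Real.pi)..Real.pi, (F (circleMap 0 r θ)).re = 2 * Real.pi := by
    have := Complex.reCLM.intervalIntegral_comp_comm (μ := volume)
      (hFc.intervalIntegrable (-Real.pi) Real.pi)
    simp only [Complex.reCLM_apply] at this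
    rw [this, hint]; simp
  have hxn : ∀ θ, ‖c * (circleMap 0 r θ) ^ k‖ = ‖c‖ * r ^ k := by
    intro θ; simp [abs_of_pos hr]
  have hnn : 0 ≤ ‖c‖ * r ^ k := by positivity
  have h1 : 0 < 1 - (‖c‖ * r ^ k) ^ 2 := by nlinarith
  have hpt : ∀ θ, (‖1 - c * (circleMap 0 r θ) ^ k‖ ^ 4)⁻¹ ≤
      4 / (1 - (‖c‖ * r ^ k) ^ 2) ^ 3 * (F (circleMap 0 r θ)).re := by
    intro θ
    have := aux_pt (c * (circleMap 0 r θ) ^ k) (by rw [hxn]; exact hc)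
    rwa [hxn] at this
  have hle : -Real.pi ≤ Real.pi := by linarith [Real.pi_pos]
  calc _ ≤ ∫⁻ θ in Set.Ioo (-Real.pi) Real.pi,
      ENNReal.ofReal (4 / (1 - (‖c‖ * r ^ k) ^ 2) ^ 3 * (F (circleMap 0 r θ)).re) :=
        lintegral_mono fun θ => ENNReal.ofReal_le_ofReal (hpt θ)
    _ = ENNReal.ofReal (∫ θ in Set.Ioo (-Real.pi) Real.pi,
        4 / (1 - (‖c‖ * r ^ k) ^ 2) ^ 3 * (F (circleMap 0 r θ)).re) := by
        rw [ofReal_integral_eq_lintegral_ofReal]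
        · refine IntegrableOn.mono_set (t := Set.Icc (-Real.pi) Real.pi) ?_ Set.Ioo_subset_Icc_self
          apply Continuous.integrableOn_Icc
          have := Complex.continuous_re.comp hFc
          exact continuous_const.mul this
        · refine Filter.Eventually.of_forall fun θ => ?_
          exact le_trans (by positivity) (hpt θ)
    _ ≤ _ := by
        apply ENNReal.ofReal_le_ofReal
        rw [← integral_Ioc_eq_integral_Ioo, ← intervalIntegral.integral_of_le hle,
          intervalIntegral.integral_const_mul, hintre]
        apply le_of_eq; ring

lemma aux_disc (k : ℕ) (hk : 1 ≤ k) (c : ℂ) (R : ℝ) (hR : 0 < R) (hc : ‖c‖ * R ^ k < 1) :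
    ∫⁻ z in Metric.ball (0:ℂ) R, ENNReal.ofReal ((‖1 - c * z ^ k‖ ^ 4)⁻¹) ≤
      ENNReal.ofReal (4 * Real.pi * R ^ 2 / (1 - (‖c‖ * R ^ k) ^ 2) ^ 2) := by
  set a := ‖c‖ * R ^ k with ha
  have ha0 : 0 ≤ a := by positivity
  set A := (a / R) ^ 2 with hA
  have hA0 : 0 ≤ A := by positivity
  have hAR : A * R ^ 2 = a ^ 2 := by rw [hA]; field_simp
  have hlt : ∀ r ∈ Set.Icc 0 R, 0 < 1 - A * r ^ 2 := by
    intro r hr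
    have : A * r ^ 2 ≤ A * R ^ 2 := by have := hr.1; have := hr.2; gcongr
    nlinarith
  rw [← lintegral_indicator Metric.isOpen_ball.measurableSet, aux_polar]
  swap
  · refine Measurable.indicator ?_ Metric.isOpen_ball.measurableSet
    fun_prop
  set H : ℝ → ℝ := fun r => 4 * Real.pi * r ^ 2 / (1 - A * r ^ 2) ^ 2 with hH
  have hd : ∀ r ∈ Set.Icc 0 R, HasDerivAt H
      (8 * Real.pi * r * (1 + A * r ^ 2) / (1 - A * r ^ 2) ^ 3) r := by
    intro r hr
    have h := (hlt r hr).ne'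
    have h1 : HasDerivAt (fun r : ℝ => 4 * Real.pi * r ^ 2) (4 * Real.pi * (2 * r)) r := by
      simpa using (hasDerivAt_pow 2 r).const_mul (4 * Real.pi)
    have h2 : HasDerivAt (fun r : ℝ => (1 - A * r ^ 2) ^ 2)
        (2 * (1 - A * r ^ 2) * (-(A * (2 * r)))) r := by
      simpa using (((hasDerivAt_pow 2 r).const_mul A).const_sub 1).fun_pow 2
    have h3 := h1.fun_div h2 (pow_ne_zero 2 h)
    have e : 8 * Real.pi * r * (1 + A * r ^ 2) / (1 - A * r ^ 2) ^ 3 =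
      (4 * Real.pi * (2 * r) * (1 - A * r ^ 2) ^ 2 -
        4 * Real.pi * r ^ 2 * (2 * (1 - A * r ^ 2) * (-(A * (2 * r))))) /
          ((1 - A * r ^ 2) ^ 2) ^ 2 := by
      rw [div_eq_div_iff (pow_ne_zero 3 h) (pow_ne_zero 2 (pow_ne_zero 2 h))]
      ring
    rw [e]
    exact h3
  have hcd : ContinuousOn (fun r => 8 * Real.pi * r * (1 + A * r ^ 2) / (1 - A * r ^ 2) ^ 3)
      (Set.Icc 0 R) := by
    apply ContinuousOn.div (by fun_prop) (by fun_prop)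
    intro r hr; exact pow_ne_zero 3 (hlt r hr).ne'
  calc _ ≤ ∫⁻ r in Set.Ioi (0:ℝ), (Set.Ioo 0 R).indicator (fun r => ENNReal.ofReal
        (8 * Real.pi * r * (1 + A * r ^ 2) / (1 - A * r ^ 2) ^ 3)) r := by
        refine setLIntegral_mono' measurableSet_Ioi ?_
        intro r hr
        have hr : 0 < r := hr
        by_cases hrR : r < R
        · rw [Set.indicator_of_mem (show r ∈ Set.Ioo 0 R from ⟨hr, hrR⟩)]
          have hin : ∀ θ, circleMap 0 r θ ∈ Metric.ball (0:ℂ) R := by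
            intro θ; simp [abs_of_pos hr, hrR]
          simp only [Set.indicator_of_mem (hin _)]
          have hcr : ‖c‖ * r ^ k ≤ a * (r / R) := by
            obtain ⟨m, rfl⟩ : ∃ m, k = m + 1 := ⟨k - 1, by omega⟩
            rw [ha]
            have : ‖c‖ * R ^ (m + 1) * (r / R) = ‖c‖ * (R ^ m * r) := by
              field_simp
              ring
            rw [this, pow_succ]
            gcongr
          have hcr2 : (‖c‖ * r ^ k) ^ 2 ≤ A * r ^ 2 := by
            have : A * r ^ 2 = (a * (r / R)) ^ 2 := by rw [hA]; ring
            rw [this]; gcongr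
          have hpos := hlt r ⟨hr.le, hrR.le⟩
          have hc1 : ‖c‖ * r ^ k < 1 := by
            have : (‖c‖ * r ^ k) ^ 2 < 1 := by linarith
            nlinarith [show 0 ≤ ‖c‖ * r ^ k by positivity]
          refine (mul_le_mul_right (aux_circle k hk c r hr hc1) _).trans ?_
          rw [← ENNReal.ofReal_mul hr.le]
          apply ENNReal.ofReal_le_ofReal
          calc r * (8 * Real.pi / (1 - (‖c‖ * r ^ k) ^ 2) ^ 3)
              ≤ r * (8 * Real.pi / (1 - A * r ^ 2) ^ 3) := by gcongr
            _ = 8 * Real.pi * r * 1 / (1 - A * r ^ 2) ^ 3 := by ring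
            _ ≤ _ := by gcongr; nlinarith [sq_nonneg r]
        · have hin : ∀ θ, circleMap 0 r θ ∉ Metric.ball (0:ℂ) R := by
            intro θ; simp [abs_of_pos hr]; linarith
          simp only [Set.indicator_of_notMem (hin _)]
          simp
    _ ≤ ∫⁻ r in Set.Ioo 0 R, ENNReal.ofReal
        (8 * Real.pi * r * (1 + A * r ^ 2) / (1 - A * r ^ 2) ^ 3) := by
        refine (setLIntegral_le_lintegral _ _).trans ?_
        rw [lintegral_indicator measurableSet_Ioo]
    _ = ENNReal.ofReal (∫ r in Set.Ioo 0 R,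
        (8 * Real.pi * r * (1 + A * r ^ 2) / (1 - A * r ^ 2) ^ 3)) := by
        rw [ofReal_integral_eq_lintegral_ofReal]
        · exact (hcd.integrableOn_Icc).mono_set Set.Ioo_subset_Icc_self
        · refine (ae_restrict_iff' measurableSet_Ioo).2 (Filter.Eventually.of_forall ?_)
          intro r hr
          have := hlt r ⟨hr.1.le, hr.2.le⟩
          have := hr.1
          simp only [Pi.zero_apply]
          positivity
    _ ≤ _ := by
        apply ENNReal.ofReal_le_ofReal
        rw [← integral_Ioc_eq_integral_Ioo, ← intervalIntegral.integral_of_le hR.le,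
          intervalIntegral.integral_eq_sub_of_hasDerivAt (f := H)]
        · simp [hH, hAR]
        · rw [Set.uIcc_of_le hR.le]; exact hd
        · apply ContinuousOn.intervalIntegrable
          rw [Set.uIcc_of_le hR.le]; exact hcd

lemma aux_outer (k : ℕ) (hk : 1 ≤ k) (δ : ℝ) (hδ : 0 < δ) :
    ∫⁻ z in Metric.ball (0:ℂ) δ, ENNReal.ofReal (‖z‖ ^ (2 / (k:ℝ) - 2)) ≤
      ENNReal.ofReal (Real.pi * k * δ ^ (2 / (k:ℝ))) := by
  have hk0 : (0:ℝ) < k := by exact_mod_cast hk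
  have hk2 : 0 < 2 / (k:ℝ) := by positivity
  rw [← lintegral_indicator Metric.isOpen_ball.measurableSet, aux_polar]
  swap
  · refine Measurable.indicator ?_ Metric.isOpen_ball.measurableSet
    fun_prop
  calc _ ≤ ∫⁻ r in Set.Ioi (0:ℝ), (Set.Ioo 0 δ).indicator (fun r => ENNReal.ofReal
        (2 * Real.pi * r ^ (2 / (k:ℝ) - 1))) r := by
        refine setLIntegral_mono' measurableSet_Ioi ?_
        intro r hr
        have hr : 0 < r := hr
        by_cases hrR : r < δ
        · rw [Set.indicator_of_mem (show r ∈ Set.Ioo 0 δ from ⟨hr, hrR⟩)]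
          have hin : ∀ θ, circleMap 0 r θ ∈ Metric.ball (0:ℂ) δ := by
            intro θ; simp [abs_of_pos hr, hrR]
          simp only [Set.indicator_of_mem (hin _)]
          simp only [norm_circleMap_zero, abs_of_pos hr, lintegral_const,
            Measure.restrict_apply_univ, Real.volume_Ioo]
          rw [← ENNReal.ofReal_mul (by positivity), ← ENNReal.ofReal_mul hr.le]
          apply ENNReal.ofReal_le_ofReal
          have : r ^ (2 / (k:ℝ) - 1) = r ^ (2 / (k:ℝ) - 2) * r := by
            rw [← Real.rpow_add_one hr.ne']; ring_nf
          rw [this]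
          apply le_of_eq; ring
        · have hin : ∀ θ, circleMap 0 r θ ∉ Metric.ball (0:ℂ) δ := by
            intro θ; simp [abs_of_pos hr]; linarith
          simp only [Set.indicator_of_notMem (hin _)]
          simp
    _ ≤ ∫⁻ r in Set.Ioo 0 δ, ENNReal.ofReal
        (2 * Real.pi * r ^ (2 / (k:ℝ) - 1)) := by
        refine (setLIntegral_le_lintegral _ _).trans ?_
        rw [lintegral_indicator measurableSet_Ioo]
    _ = ENNReal.ofReal (∫ r in Set.Ioo 0 δ,
        (2 * Real.pi * r ^ (2 / (k:ℝ) - 1))) := by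
        rw [ofReal_integral_eq_lintegral_ofReal]
        · have := intervalIntegral.intervalIntegrable_rpow' (a := 0) (b := δ)
            (show -1 < 2 / (k:ℝ) - 1 by linarith)
          rw [intervalIntegrable_iff_integrableOn_Ioo_of_le hδ.le] at this
          exact this.const_mul _
        · refine (ae_restrict_iff' measurableSet_Ioo).2 (Filter.Eventually.of_forall ?_)
          intro r hr
          have := hr.1
          simp only [Pi.zero_apply]
          positivity
    _ ≤ _ := by
        apply ENNReal.ofReal_le_ofReal
        rw [← integral_Ioc_eq_integral_Ioo, ← intervalIntegral.integral_of_le hδ.le,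
          intervalIntegral.integral_const_mul, integral_rpow (Or.inl (by linarith))]
        have : 2 / (k:ℝ) - 1 + 1 = 2 / (k:ℝ) := by ring
        rw [this, Real.zero_rpow hk2.ne']
        apply le_of_eq; field_simp; ring

lemma aux_kernel (k : ℕ) (z w : ℂ × ℂ) (hz2 : z.2 ≠ 0) (hw2 : w.2 ≠ 0)
    (hz : ‖z.2‖ ≤ 1 / 2) (hw : ‖w.2‖ ≤ 1) :
    ‖Pker k z w‖ ^ 2 ≤ 16 * (‖w.2‖ ^ 2)⁻¹ * (‖z.2‖ ^ 2)⁻¹ *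
      (‖1 - (conj w.1 ^ k / (z.2 * conj w.2)) * z.1 ^ k‖ ^ 4)⁻¹ := by
  have hcw : conj w.2 ≠ 0 := by simpa using hw2
  set t := z.2 * conj w.2 with ht
  have ht0 : t ≠ 0 := mul_ne_zero hz2 hcw
  have htn : ‖t‖ = ‖z.2‖ * ‖w.2‖ := by rw [ht]; simp
  have hth : ‖t‖ ≤ 1 / 2 := by
    rw [htn]; nlinarith [norm_nonneg z.2, norm_nonneg w.2]
  have h1 : 1 / 2 ≤ ‖1 - t‖ := by
    have := norm_sub_norm_le (1:ℂ) t
    simp at this; linarith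
  have hs : t - (z.1 * conj w.1) ^ k = t * (1 - (conj w.1 ^ k / t) * z.1 ^ k) := by
    field_simp; ring
  unfold Pker
  rw [← ht, hs]
  set q := 1 - (conj w.1 ^ k / t) * z.1 ^ k
  have htp : 0 < ‖t‖ := norm_pos_iff.2 ht0
  have : ‖t / ((1 - t) ^ 2 * (t * q) ^ 2)‖ ^ 2 = (‖1 - t‖ ^ 4)⁻¹ * ((‖t‖ ^ 2)⁻¹ * (‖q‖ ^ 4)⁻¹) := by
    simp only [norm_div, norm_mul, norm_pow]
    rcases eq_or_ne ‖q‖ 0 with hq | hq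
    · simp [hq]
    · have : ‖1 - t‖ ≠ 0 := by linarith
      field_simp
  rw [this]
  have h4 : (‖1 - t‖ ^ 4)⁻¹ ≤ 16 := by
    have : (1/2:ℝ) ^ 4 ≤ ‖1 - t‖ ^ 4 := by gcongr
    calc (‖1 - t‖ ^ 4)⁻¹ ≤ ((1/2:ℝ) ^ 4)⁻¹ := by gcongr
      _ = 16 := by norm_num
  calc _ ≤ 16 * ((‖t‖ ^ 2)⁻¹ * (‖q‖ ^ 4)⁻¹) := by gcongr
    _ = _ := by rw [htn, mul_pow, mul_inv]; ring

lemma aux_main (k : ℕ) (hk : 1 ≤ k) (δ : ℝ) (hδ : 0 < δ) (hδ2 : δ ≤ 1 / 2)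
    (w : ℂ × ℂ) (hw : w ∈ hartogsTriangle k) :
    ∫⁻ z in {z ∈ hartogsTriangle k | ‖z.2‖ < δ}, ENNReal.ofReal (‖Pker k z w‖ ^ 2) ≤
      ENNReal.ofReal (64 * Real.pi ^ 2 * k * δ ^ (2 / (k:ℝ)) * (‖w.2‖ ^ 2)⁻¹ *
          ((1 - ‖w.1‖ ^ (2 * k) / ‖w.2‖ ^ 2) ^ 2)⁻¹) := by
  obtain ⟨hw1, hw2⟩ := hw
  have hk0 : (0:ℝ) < k := by exact_mod_cast hk
  have hwp : 0 < ‖w.2‖ := lt_of_le_of_lt (by positivity) hw1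
  have hw0 : w.2 ≠ 0 := norm_pos_iff.1 hwp
  set S : Set (ℂ × ℂ) := {z ∈ hartogsTriangle k | ‖z.2‖ < δ} with hS
  have hSm : MeasurableSet S := by
    have : S = {z : ℂ × ℂ | ‖z.1‖ ^ k < ‖z.2‖} ∩ {z | ‖z.2‖ < 1} ∩ {z | ‖z.2‖ < δ} := rfl
    rw [this]
    refine MeasurableSet.inter (MeasurableSet.inter ?_ ?_) ?_
    · exact measurableSet_lt (by fun_prop) (by fun_prop)
    · exact measurableSet_lt (by fun_prop) (by fun_prop)
    · exact measurableSet_lt (by fun_prop) (by fun_prop)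
  have hPm : Measurable fun z => ENNReal.ofReal (‖Pker k z w‖ ^ 2) := by
    unfold Pker; fun_prop
  set B := (1 - ‖w.1‖ ^ (2 * k) / ‖w.2‖ ^ 2) with hB
  set K : ℝ := 64 * Real.pi * (‖w.2‖ ^ 2)⁻¹ * (B ^ 2)⁻¹ with hK
  have hK0 : 0 ≤ K := by positivity
  rw [← lintegral_indicator hSm, Measure.volume_eq_prod,
    lintegral_prod_symm' _ (hPm.indicator hSm)]
  calc _ ≤ ∫⁻ z2, (Metric.ball (0:ℂ) δ).indicator (fun z2 : ℂ => ENNReal.ofReal K *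
        ENNReal.ofReal (‖z2‖ ^ (2 / (k:ℝ) - 2))) z2 := by
        refine lintegral_mono fun z2 => ?_
        by_cases hz2 : 0 < ‖z2‖ ∧ ‖z2‖ < δ
        · obtain ⟨hzp, hzδ⟩ := hz2
          have hz0 : z2 ≠ 0 := norm_pos_iff.1 hzp
          rw [Set.indicator_of_mem (by simpa using hzδ)]
          set R : ℝ := ‖z2‖ ^ (1 / (k:ℝ)) with hR
          have hRp : 0 < R := by positivity
          have hRk : R ^ k = ‖z2‖ := by
            rw [hR, one_div]; exact Real.rpow_inv_natCast_pow hzp.le (by omega)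
          set c := conj w.1 ^ k / (z2 * conj w.2) with hc
          have hca : ‖c‖ * R ^ k = ‖w.1‖ ^ k / ‖w.2‖ := by
            rw [hRk, hc]; simp; field_simp
          have hc1 : ‖c‖ * R ^ k < 1 := by rw [hca, div_lt_one hwp]; exact hw1
          have hBB : 1 - (‖c‖ * R ^ k) ^ 2 = B := by
            rw [hca, hB, div_pow, ← pow_mul, mul_comm k 2]
          have hR2 : R ^ 2 * (‖z2‖ ^ 2)⁻¹ = ‖z2‖ ^ (2 / (k:ℝ) - 2) := by
            rw [Real.rpow_sub hzp, hR, ← Real.rpow_mul_natCast hzp.le]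
            have e1 : 1 / (k:ℝ) * ((2:ℕ):ℝ) = 2 / k := by push_cast; ring
            have e2 : ‖z2‖ ^ (2:ℝ) = ‖z2‖ ^ 2 := Real.rpow_two _
            rw [e1, e2, ← div_eq_mul_inv]
          calc ∫⁻ z1, S.indicator (fun z => ENNReal.ofReal (‖Pker k z w‖ ^ 2)) (z1, z2)
              ≤ ∫⁻ z1, (Metric.ball (0:ℂ) R).indicator (fun z1 =>
                ENNReal.ofReal (16 * (‖w.2‖ ^ 2)⁻¹ * (‖z2‖ ^ 2)⁻¹) *
                ENNReal.ofReal ((‖1 - c * z1 ^ k‖ ^ 4)⁻¹)) z1 := by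
                refine lintegral_mono fun z1 => ?_
                by_cases hz : (z1, z2) ∈ S
                · have hz1 : z1 ∈ Metric.ball (0:ℂ) R := by
                    have : ‖z1‖ ^ k < ‖z2‖ := hz.1.1
                    rw [← hRk] at this
                    simpa using lt_of_pow_lt_pow_left₀ k hRp.le this
                  rw [Set.indicator_of_mem hz, Set.indicator_of_mem hz1,
                    ← ENNReal.ofReal_mul (by positivity)]
                  exact ENNReal.ofReal_le_ofReal
                    (aux_kernel k (z1, z2) w hz0 hw0 (by simp only; linarith) hw2.le)
                · rw [Set.indicator_of_notMem hz]; exact zero_le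
            _ = ENNReal.ofReal (16 * (‖w.2‖ ^ 2)⁻¹ * (‖z2‖ ^ 2)⁻¹) *
                ∫⁻ z1 in Metric.ball (0:ℂ) R, ENNReal.ofReal ((‖1 - c * z1 ^ k‖ ^ 4)⁻¹) := by
                rw [lintegral_indicator Metric.isOpen_ball.measurableSet,
                  lintegral_const_mul' _ _ ENNReal.ofReal_ne_top]
            _ ≤ ENNReal.ofReal (16 * (‖w.2‖ ^ 2)⁻¹ * (‖z2‖ ^ 2)⁻¹) *
                ENNReal.ofReal (4 * Real.pi * R ^ 2 / (1 - (‖c‖ * R ^ k) ^ 2) ^ 2) :=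
                mul_le_mul_right (aux_disc k hk c R hRp hc1) _
            _ ≤ _ := by
                rw [hBB, ← ENNReal.ofReal_mul (by positivity), ← ENNReal.ofReal_mul hK0, ← hR2]
                apply ENNReal.ofReal_le_ofReal
                rw [hK]; apply le_of_eq; ring
        · have : ∀ z1, (z1, z2) ∉ S := by
            intro z1 hz
            exact hz2 ⟨lt_of_le_of_lt (by positivity) hz.1.1, hz.2⟩
          simp [Set.indicator_of_notMem (this _)]
    _ = ENNReal.ofReal K * ∫⁻ z2 in Metric.ball (0:ℂ) δ,
          ENNReal.ofReal (‖z2‖ ^ (2 / (k:ℝ) - 2)) := by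
        rw [lintegral_indicator Metric.isOpen_ball.measurableSet,
          lintegral_const_mul' _ _ ENNReal.ofReal_ne_top]
    _ ≤ ENNReal.ofReal K * ENNReal.ofReal (Real.pi * k * δ ^ (2 / (k:ℝ))) :=
        mul_le_mul_right (aux_outer k hk δ hδ) _
    _ ≤ _ := by
        rw [← ENNReal.ofReal_mul hK0]
        apply ENNReal.ofReal_le_ofReal
        rw [hK]; apply le_of_eq; ring

theorem stmt4 (k : ℕ) (hk : 1 ≤ k) :
    ∀ ε : ℝ, 0 < ε → ∃ δ : ℝ, 0 < δ ∧ ∀ w ∈ hartogsTriangle k,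
      (∫ z in {z ∈ hartogsTriangle k | ‖z.2‖ < δ}, ‖Pker k z w‖ ^ 2) ≤
        ε * (‖w.2‖ ^ 2)⁻¹ * ((1 - ‖w.2‖ ^ 2) ^ 2)⁻¹ *
          ((1 - ‖w.1‖ ^ (2 * k) / ‖w.2‖ ^ 2) ^ 2)⁻¹ := by
  intro ε hε
  have hk0 : (0:ℝ) < k := by exact_mod_cast hk
  set M : ℝ := 64 * Real.pi ^ 2 * k with hM
  have hM0 : 0 < M := by positivity
  set δ : ℝ := min ((ε / M) ^ ((k:ℝ) / 2)) (1 / 2) with hδ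
  have hδ0 : 0 < δ := lt_min (by positivity) (by norm_num)
  have hδε : M * δ ^ (2 / (k:ℝ)) ≤ ε := by
    have : δ ^ (2 / (k:ℝ)) ≤ ε / M := by
      calc δ ^ (2 / (k:ℝ)) ≤ ((ε / M) ^ ((k:ℝ) / 2)) ^ (2 / (k:ℝ)) := by
            apply Real.rpow_le_rpow hδ0.le (min_le_left _ _) (by positivity)
        _ = ε / M := by
            rw [← Real.rpow_mul (by positivity)]
            have : (k:ℝ) / 2 * (2 / k) = 1 := by field_simp
            rw [this, Real.rpow_one]
    rw [le_div_iff₀ hM0] at this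
    linarith
  refine ⟨δ, hδ0, fun w hw => ?_⟩
  have hmain := aux_main k hk δ hδ0 (min_le_right _ _) w hw
  rw [integral_eq_lintegral_of_nonneg_ae (Filter.Eventually.of_forall fun z => by positivity)
    (by unfold Pker; exact Measurable.aestronglyMeasurable (by fun_prop))]
  refine (ENNReal.toReal_le_of_le_ofReal (by positivity) hmain).trans ?_
  obtain ⟨hw1, hw2⟩ := hw
  have hwp : 0 < ‖w.2‖ := lt_of_le_of_lt (by positivity) hw1
  have h1 : 1 ≤ ((1 - ‖w.2‖ ^ 2) ^ 2)⁻¹ := by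
    have h2 : 0 < 1 - ‖w.2‖ ^ 2 := by nlinarith
    apply (one_le_inv₀ (by positivity)).2
    nlinarith
  gcongr ?_ * _
  calc M * δ ^ (2 / (k:ℝ)) * (‖w.2‖ ^ 2)⁻¹ ≤ ε * (‖w.2‖ ^ 2)⁻¹ * 1 := by
        rw [mul_one]; gcongr
    _ ≤ _ := by gcongr
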